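/- (Theorem 1, propensity-score and outcome models correct.) Fix d in {(1,1),(0,1),(1,0)} and d' = (0,0). Suppose Assumption DID holds for d and for d', Assumption MAR holds, P(D = d | X) > 0 and P(D = d' | X) > 0 a.s., all four Hájek-weight denominators are finite and strictly positive, and all expectations defining τ^R_{dd'} are finite. If, a.s., π_{d1|d2}(X) = p_{d1|d2}(X), π_{d2}(X) = p_{d2}(X), π_{0|0}(X) = p_{0|0}(X), π_0(X) = p_0(X) (so that π_d = p_d and π_{d'} = p_{d'}), and μ_d(X) = m_d(X), μ_{d'}(X) = m_{d'}(X), while φ_{d2} and φ_0 are arbitrary (0,1]-valued measurable functions of X, then τ^R_{dd'} = τ_{dd'}. -/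

import Mathlib

open MeasureTheory Set
open scoped Classical

noncomputable section

namespace DIDMissing

variable {Ω : Type*} {𝓧 : Type*}

/-- Real-valued indicator of a set. -/
def ind (A : Set Ω) : Ω → ℝ := A.indicator fun _ => (1 : ℝ)

/-- All treatment paths `{0,1}²` (coded as reals). -/
def allPaths : Set (ℝ × ℝ) := {(0, 0), (0, 1), (1, 0), (1, 1)}

/-- The three treated paths `{(1,1), (0,1), (1,0)}`. -/
def threePaths : Set (ℝ × ℝ) := {(1, 1), (0, 1), (1, 0)}

/-- The event `{D = d}` for a treatment path `d = (d₁, d₂)`. -/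
def evD (D1 D2 : Ω → ℝ) (d : ℝ × ℝ) : Set Ω := {ω | D1 ω = d.1 ∧ D2 ω = d.2}

/-- The event `{D₂ = b}`. -/
def evD2 (D2 : Ω → ℝ) (b : ℝ) : Set Ω := {ω | D2 ω = b}

/-- `g` is a (measurable-in-the-covariate) version of the conditional mean `E[Z ∣ A, X]`:
for every bounded measurable `h`, `E[1_A · Z · h(X)] = E[1_A · g(X) · h(X)]`. -/
def IsCondMeanGiven [MeasurableSpace Ω] [MeasurableSpace 𝓧] (P : Measure Ω) (X : Ω → 𝓧)
    (A : Set Ω) (Z : Ω → ℝ) (g : 𝓧 → ℝ) : Prop :=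
  Measurable g ∧
    ∀ h : 𝓧 → ℝ, Measurable h → (∃ C, ∀ x, |h x| ≤ C) →
      ∫ ω, ind A ω * Z ω * h (X ω) ∂P = ∫ ω, ind A ω * g (X ω) * h (X ω) ∂P

/-- Assumption DID for a path `d` relative to `d' = (0,0)`:
(i) no anticipation, `E[Y₀(d) ∣ D = d, X] = E[Y₀(0,0) ∣ D = d, X]` a.s., stated in the
version-free integral form; and (ii) conditional parallel trends, stated as the existence
of a common version of `E[Y₂(0,0) − Y₀(0,0) ∣ X]` and `E[Y₂(0,0) − Y₀(0,0) ∣ D = d, X]`. -/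
def DID [MeasurableSpace Ω] [MeasurableSpace 𝓧] (P : Measure Ω) (X : Ω → 𝓧)
    (D1 D2 : Ω → ℝ) (Y0p Y2p : ℝ × ℝ → Ω → ℝ) (d : ℝ × ℝ) : Prop :=
  (∀ h : 𝓧 → ℝ, Measurable h → (∃ C, ∀ x, |h x| ≤ C) →
      ∫ ω, ind (evD D1 D2 d) ω * Y0p d ω * h (X ω) ∂P
        = ∫ ω, ind (evD D1 D2 d) ω * Y0p (0, 0) ω * h (X ω) ∂P) ∧
  (∃ tr : 𝓧 → ℝ,
      IsCondMeanGiven P X Set.univ (fun ω => Y2p (0, 0) ω - Y0p (0, 0) ω) tr ∧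
      IsCondMeanGiven P X (evD D1 D2 d) (fun ω => Y2p (0, 0) ω - Y0p (0, 0) ω) tr)

/-- Assumption MAR: `S ⟂ (D₁, ΔY) ∣ (D₂, X)`, where `q d₂` is a version of the
missing-data probability `P(S = 1 ∣ D₂ = d₂, X)`, which is `(0,1]`-valued a.s. -/
def MAR [MeasurableSpace Ω] [MeasurableSpace 𝓧] (P : Measure Ω) (X : Ω → 𝓧)
    (D1 D2 S Y0 Y2 : Ω → ℝ) (q : ℝ → 𝓧 → ℝ) : Prop :=
  (∀ d2 ∈ ({0, 1} : Set ℝ), IsCondMeanGiven P X (evD2 D2 d2) S (q d2)) ∧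
  (∀ d2 ∈ ({0, 1} : Set ℝ), ∀ᵐ ω ∂P, 0 < q d2 (X ω) ∧ q d2 (X ω) ≤ 1) ∧
  (∀ d2 ∈ ({0, 1} : Set ℝ), ∀ f : ℝ × ℝ → ℝ, Measurable f → (∃ C, ∀ p, |f p| ≤ C) →
      ∀ h : 𝓧 → ℝ, Measurable h → (∃ C, ∀ x, |h x| ≤ C) →
        ∫ ω, ind (evD2 D2 d2) ω * S ω * f (D1 ω, Y2 ω - Y0 ω) * h (X ω) ∂P
          = ∫ ω, ind (evD2 D2 d2) ω * q d2 (X ω) * f (D1 ω, Y2 ω - Y0 ω) * h (X ω) ∂P)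

/-- The path-dependent ATT `τ_{d,(0,0)} = E[Y₂(d) − Y₂(0,0) ∣ D = d]`. -/
def tau [MeasurableSpace Ω] (P : Measure Ω) (D1 D2 : Ω → ℝ)
    (Y2p : ℝ × ℝ → Ω → ℝ) (d : ℝ × ℝ) : ℝ :=
  (P (evD D1 D2 d)).toReal⁻¹ * ∫ ω in evD D1 D2 d, (Y2p d ω - Y2p (0, 0) ω) ∂P

/-- Numerator of the Hájek weight `w₁`. -/
def n1 (X : Ω → 𝓧) (D1 D2 S : Ω → ℝ) (φ2 : 𝓧 → ℝ) (d : ℝ × ℝ) : Ω → ℝ :=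
  fun ω => S ω / φ2 (X ω) * ind (evD D1 D2 d) ω

/-- Numerator of the Hájek weight `w₂`. -/
def n2 (X : Ω → 𝓧) (D1 D2 S : Ω → ℝ) (φ0 πc πc' π2 π0 : 𝓧 → ℝ) : Ω → ℝ :=
  fun ω => S ω / φ0 (X ω) * (πc (X ω) * π2 (X ω) / (πc' (X ω) * π0 (X ω)))
    * ind (evD D1 D2 (0, 0)) ω

/-- Numerator of the Hájek weight `w₃`. -/
def n3 (X : Ω → 𝓧) (D2 : Ω → ℝ) (πc : 𝓧 → ℝ) (d2 : ℝ) : Ω → ℝ :=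
  fun ω => πc (X ω) * ind (evD2 D2 d2) ω

/-- Numerator of the Hájek weight `w₄`. -/
def n4 (X : Ω → 𝓧) (D2 S : Ω → ℝ) (φ2 πc : 𝓧 → ℝ) (d2 : ℝ) : Ω → ℝ :=
  fun ω => S ω / φ2 (X ω) * πc (X ω) * ind (evD2 D2 d2) ω

/-- The robust estimand `τ^R_{d,(0,0)}`. -/
def tauR [MeasurableSpace Ω] (P : Measure Ω) (X : Ω → 𝓧) (D1 D2 S Y0 Y2 : Ω → ℝ)
    (d : ℝ × ℝ) (μd μd' πc πc' π2 π0 φ2 φ0 : 𝓧 → ℝ) : ℝ :=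
  (∫ ω, (n1 X D1 D2 S φ2 d ω / ∫ ω', n1 X D1 D2 S φ2 d ω' ∂P
        - n2 X D1 D2 S φ0 πc πc' π2 π0 ω / ∫ ω', n2 X D1 D2 S φ0 πc πc' π2 π0 ω' ∂P)
      * (Y2 ω - Y0 ω - μd' (X ω)) ∂P)
  + ∫ ω, (n3 X D2 πc d.2 ω / ∫ ω', n3 X D2 πc d.2 ω' ∂P
        - n4 X D2 S φ2 πc d.2 ω / ∫ ω', n4 X D2 S φ2 πc d.2 ω' ∂P)
      * (μd (X ω) - μd' (X ω)) ∂P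

/- helper lemmas -/

theorem aux_ext {Ω' E : Type*} [MeasurableSpace Ω'] [MeasurableSpace E] (P : Measure Ω')
    (X : Ω' → E) (hX : Measurable X) (U V : Ω' → ℝ) (hU : Measurable U) (hV : Measurable V)
    (H : ∀ h : E → ℝ, Measurable h → (∃ C, ∀ x, |h x| ≤ C) →
      ∫ ω, U ω * h (X ω) ∂P = ∫ ω, V ω * h (X ω) ∂P)
    (g : E → ℝ) (hg : Measurable g)
    (hUg : Integrable (fun ω => U ω * g (X ω)) P) (hVg : Integrable (fun ω => V ω * g (X ω)) P) :
    ∫ ω, U ω * g (X ω) ∂P = ∫ ω, V ω * g (X ω) ∂P := by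
  have hm : ∀ n : ℕ, Measurable (fun x => if |g x| ≤ (n : ℝ) then g x else 0) := fun n =>
    Measurable.ite (measurableSet_le hg.abs measurable_const) hg measurable_const
  have key : ∀ W : Ω' → ℝ, Measurable W → Integrable (fun ω => W ω * g (X ω)) P →
      Filter.Tendsto (fun n : ℕ => ∫ ω, W ω * (fun x => if |g x| ≤ (n : ℝ) then g x else 0) (X ω) ∂P)
        Filter.atTop (nhds (∫ ω, W ω * g (X ω) ∂P)) := by
    intro W hW hWi
    apply tendsto_integral_of_dominated_convergence (fun ω => ‖W ω * g (X ω)‖)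
    · intro n
      exact (hW.mul ((hm n).comp hX)).aestronglyMeasurable
    · exact hWi.norm
    · intro n
      refine Filter.Eventually.of_forall fun ω => ?_
      simp only [norm_mul]
      refine mul_le_mul_of_nonneg_left ?_ (norm_nonneg _)
      split_ifs
      · exact le_rfl
      · simp
    · refine Filter.Eventually.of_forall fun ω => ?_
      obtain ⟨N, hN⟩ := exists_nat_ge |g (X ω)|
      apply tendsto_const_nhds.congr'
      filter_upwards [Filter.eventually_ge_atTop N] with n hn
      have : |g (X ω)| ≤ (n : ℝ) := hN.trans (by exact_mod_cast hn)
      simp [this]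
  refine tendsto_nhds_unique (key U hU hUg) ((key V hV hVg).congr fun n => ?_)
  refine (H _ (hm n) ⟨n, fun x => ?_⟩).symm
  split_ifs with h
  · exact h
  · simp

theorem ind_meas {Ω' : Type*} [MeasurableSpace Ω'] {A : Set Ω'} (hA : MeasurableSet A) :
    Measurable (ind A) := measurable_const.indicator hA

theorem ind_abs {Ω' : Type*} (A : Set Ω') (ω : Ω') : |ind A ω| ≤ 1 := by
  unfold ind Set.indicator; split_ifs <;> simp

theorem aux_unique {Ω' E : Type*} [MeasurableSpace Ω'] [MeasurableSpace E] (P : Measure Ω')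
    [IsProbabilityMeasure P]
    (X : Ω' → E) (hX : Measurable X) (U : Ω' → ℝ) (hU : Measurable U) (hU0 : ∀ᵐ ω ∂P, 0 ≤ U ω)
    (hUi : Integrable U P)
    (g k : E → ℝ) (hg : Measurable g) (hk : Measurable k)
    (H : ∀ h : E → ℝ, Measurable h → (∃ C, ∀ x, |h x| ≤ C) →
      ∫ ω, U ω * g (X ω) * h (X ω) ∂P = ∫ ω, U ω * k (X ω) * h (X ω) ∂P) :
    ∀ᵐ ω ∂P, U ω * |g (X ω) - k (X ω)| = 0 := by
  have hn : ∀ n : ℕ, ∀ᵐ ω ∂P, (|g (X ω)| ≤ n ∧ |k (X ω)| ≤ n) → U ω * |g (X ω) - k (X ω)| = 0 := by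
    intro n
    set T : Set E := {x | |g x| ≤ (n : ℝ) ∧ |k x| ≤ (n : ℝ)} with hT
    have hTm : MeasurableSet T :=
      (measurableSet_le hg.abs measurable_const).inter (measurableSet_le hk.abs measurable_const)
    set s : E → ℝ := fun x => if k x ≤ g x then 1 else -1 with hs
    have hsm : Measurable s :=
      Measurable.ite (measurableSet_le hk hg) measurable_const measurable_const
    have hs1 : ∀ x, |s x| ≤ 1 := by intro x; simp only [hs]; split_ifs <;> simp
    set h : E → ℝ := fun x => s x * ind T x with hh
    have hhm : Measurable h := hsm.mul (ind_meas hTm)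
    have hh1 : ∀ x, |h x| ≤ 1 := by
      intro x; simp only [hh, abs_mul]
      exact mul_le_one₀ (hs1 x) (abs_nonneg _) (ind_abs _ _)
    have hi : ∀ r : E → ℝ, Measurable r → (∀ x ∈ T, |r x| ≤ n) →
        Integrable (fun ω => U ω * r (X ω) * h (X ω)) P := by
      intro r hr hrT
      refine (hUi.mul_const (n : ℝ)).mono ((hU.mul (hr.comp hX)).mul (hhm.comp hX)).aestronglyMeasurable
        (Filter.Eventually.of_forall fun ω => ?_)
      simp only [Real.norm_eq_abs, abs_mul, mul_assoc, Nat.abs_cast]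
      refine mul_le_mul_of_nonneg_left ?_ (abs_nonneg _)
      by_cases hx : X ω ∈ T
      · calc |r (X ω)| * |h (X ω)| ≤ n * 1 :=
              mul_le_mul (hrT _ hx) (hh1 _) (abs_nonneg _) (Nat.cast_nonneg _)
          _ = n := mul_one _
      · simp [hh, ind, hx]
    have hig := hi g hg (fun x hx => hx.1)
    have hik := hi k hk (fun x hx => hx.2)
    have h0 : ∫ ω, (U ω * g (X ω) * h (X ω) - U ω * k (X ω) * h (X ω)) ∂P = 0 := by
      rw [integral_sub hig hik, H h hhm ⟨1, hh1⟩, sub_self]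
    have hae := (integral_eq_zero_iff_of_nonneg_ae ?_ (hig.sub hik)).1 h0
    · filter_upwards [hae] with ω hω hx
      have hx' : X ω ∈ T := hx
      simp only [hh, ind, hx', Set.indicator_of_mem, Pi.zero_apply, Pi.sub_apply, hs] at hω
      rw [← hω]
      split_ifs with hc
      · rw [abs_of_nonneg (by linarith)]; ring
      · rw [abs_of_neg (by linarith)]; ring
    · filter_upwards [hU0] with ω hω
      simp only [Pi.zero_apply, hh, hs]
      by_cases hx : X ω ∈ T
      · simp only [ind, hx, Set.indicator_of_mem, Pi.sub_apply]
        split_ifs with hc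
        · nlinarith [mul_le_mul_of_nonneg_left hc hω]
        · nlinarith [mul_le_mul_of_nonneg_left (not_le.1 hc).le hω]
      · simp [ind, hx]
  filter_upwards [ae_all_iff.2 hn] with ω hω
  obtain ⟨N, hN⟩ := exists_nat_ge (max |g (X ω)| |k (X ω)|)
  exact hω N ⟨(le_max_left _ _).trans hN, (le_max_right _ _).trans hN⟩

theorem ind_evD {Ω' : Type*} (D1 D2 : Ω' → ℝ) (e : ℝ × ℝ) (ω : Ω') :
    ind (evD D1 D2 e) ω = ind (evD2 D2 e.2) ω * ind {ω | D1 ω = e.1} ω := by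
  by_cases h1 : D1 ω = e.1 <;> by_cases h2 : D2 ω = e.2 <;>
    simp [ind, evD, evD2, Set.indicator, h1, h2]

theorem integrable_bdd_mul' {Ω' : Type*} [MeasurableSpace Ω'] (P : Measure Ω')
    (f g : Ω' → ℝ) (hf : Measurable f) (C : ℝ) (hC : ∀ ω, |f ω| ≤ C) (hg : Integrable g P) :
    Integrable (fun ω => f ω * g ω) P :=
  hg.bdd_mul hf.aestronglyMeasurable (Filter.Eventually.of_forall hC)

theorem meas_evD {Ω' : Type*} [MeasurableSpace Ω'] {D1 D2 : Ω' → ℝ}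
    (hD1 : Measurable D1) (hD2 : Measurable D2) (e : ℝ × ℝ) : MeasurableSet (evD D1 D2 e) :=
  (hD1 (measurableSet_singleton e.1)).inter (hD2 (measurableSet_singleton e.2))

theorem meas_evD2 {Ω' : Type*} [MeasurableSpace Ω'] {D2 : Ω' → ℝ}
    (hD2 : Measurable D2) (b : ℝ) : MeasurableSet (evD2 D2 b) :=
  hD2 (measurableSet_singleton b)

/-- MAR with a bounded version of `q`. -/
theorem aux_mar {Ω' E : Type*} [MeasurableSpace Ω'] [MeasurableSpace E] (P : Measure Ω')
    (X : Ω' → E) (D1 D2 S Y0 Y2 : Ω' → ℝ) (q : ℝ → E → ℝ) (hMAR : MAR P X D1 D2 S Y0 Y2 q)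
    (b : ℝ) (hb : b ∈ ({0, 1} : Set ℝ)) :
    ∃ r : E → ℝ, Measurable r ∧ (∀ x, |r x| ≤ 1) ∧
      ∀ f : ℝ × ℝ → ℝ, Measurable f → (∃ C, ∀ p, |f p| ≤ C) →
      ∀ h : E → ℝ, Measurable h → (∃ C, ∀ x, |h x| ≤ C) →
        ∫ ω, ind (evD2 D2 b) ω * S ω * f (D1 ω, Y2 ω - Y0 ω) * h (X ω) ∂P
          = ∫ ω, ind (evD2 D2 b) ω * r (X ω) * f (D1 ω, Y2 ω - Y0 ω) * h (X ω) ∂P := by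
  obtain ⟨h1, h2, h3⟩ := hMAR
  refine ⟨fun x => max 0 (min 1 (q b x)),
    measurable_const.max (measurable_const.min (h1 b hb).1), fun x => ?_, ?_⟩
  · rw [abs_of_nonneg (le_max_left _ _)]
    exact max_le zero_le_one (min_le_left _ _)
  · intro f hf hfC h hh hhC
    rw [h3 b hb f hf hfC h hh hhC]
    apply integral_congr_ae
    filter_upwards [h2 b hb] with ω hω
    rw [min_eq_right hω.2, max_eq_right hω.1.le]

theorem S_abs {Ω' : Type*} (S : Ω' → ℝ) (hSv : ∀ ω, S ω = 0 ∨ S ω = 1) (ω : Ω') : |S ω| ≤ 1 := by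
  rcases hSv ω with h | h <;> simp [h]

theorem aux_core1 {Ω' E : Type*} [MeasurableSpace Ω'] [MeasurableSpace E] (P : Measure Ω')
    (X : Ω' → E) (hX : Measurable X) (D1 D2 S Y0 Y2 : Ω' → ℝ)
    (hY0 : Measurable Y0) (hY2 : Measurable Y2)
    (hY0i : Integrable Y0 P) (hY2i : Integrable Y2 P)
    (hD1 : Measurable D1) (hD2 : Measurable D2) (hS : Measurable S)
    (hSv : ∀ ω, S ω = 0 ∨ S ω = 1)
    (q : ℝ → E → ℝ) (hMAR : MAR P X D1 D2 S Y0 Y2 q)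
    (e : ℝ × ℝ) (he : e.2 ∈ ({0, 1} : Set ℝ)) (m : E → ℝ)
    (hm : IsCondMeanGiven P X (evD D1 D2 e) (fun ω => Y2 ω - Y0 ω) m)
    (hmi : Integrable (fun ω => m (X ω)) P)
    (h : E → ℝ) (hh : Measurable h) (hhC : ∃ C, ∀ x, |h x| ≤ C) :
    ∫ ω, ind (evD D1 D2 e) ω * S ω * h (X ω) * (Y2 ω - Y0 ω) ∂P
      = ∫ ω, ind (evD D1 D2 e) ω * S ω * h (X ω) * m (X ω) ∂P := by
  obtain ⟨r, hr, hr1, hM⟩ := aux_mar P X D1 D2 S Y0 Y2 q hMAR e.2 he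
  obtain ⟨C, hC⟩ := hhC
  have hI := ind_meas (meas_evD hD1 hD2 e)
  have hb : ∀ Z : Ω' → ℝ, (∀ ω, |Z ω| ≤ 1) → ∀ ω, |ind (evD D1 D2 e) ω * Z ω * h (X ω)| ≤ C := by
    intro Z hZ ω
    rw [abs_mul, abs_mul]
    have h1 := mul_le_one₀ (ind_abs (evD D1 D2 e) ω) (abs_nonneg _) (hZ ω)
    calc _ ≤ 1 * |h (X ω)| := mul_le_mul_of_nonneg_right h1 (abs_nonneg _)
      _ ≤ C := by rw [one_mul]; exact hC _
  have hA : Measurable (fun ω => ind (evD D1 D2 e) ω * S ω * h (X ω)) :=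
    (hI.mul hS).mul (hh.comp hX)
  have hB : Measurable (fun ω => ind (evD D1 D2 e) ω * r (X ω) * h (X ω)) :=
    (hI.mul (hr.comp hX)).mul (hh.comp hX)
  have hfm : Measurable (ind {p : ℝ × ℝ | p.1 = e.1}) :=
    ind_meas (measurable_fst (measurableSet_singleton e.1))
  have hie : ∀ ω y, ind {p : ℝ × ℝ | p.1 = e.1} (D1 ω, y) = ind {ω | D1 ω = e.1} ω := by
    intro ω y; simp [ind, Set.indicator]
  have step1 : ∫ ω, ind (evD D1 D2 e) ω * S ω * h (X ω) * id (Y2 ω - Y0 ω) ∂P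
      = ∫ ω, ind (evD D1 D2 e) ω * r (X ω) * h (X ω) * id (Y2 ω - Y0 ω) ∂P := by
    refine aux_ext P (fun ω => Y2 ω - Y0 ω) (hY2.sub hY0) _ _ hA hB ?_ id measurable_id ?_ ?_
    · rintro k hk ⟨K, hK⟩
      have := hM (fun p => ind {p : ℝ × ℝ | p.1 = e.1} p * k p.2)
        (hfm.mul (hk.comp measurable_snd)) ⟨K, fun p => by
          rw [abs_mul]
          calc _ ≤ 1 * |k p.2| := mul_le_mul_of_nonneg_right (ind_abs _ _) (abs_nonneg _)
            _ ≤ K := by rw [one_mul]; exact hK _⟩ h hh ⟨C, hC⟩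
      simp only [hie] at this
      simp only [ind_evD]
      convert this using 2 <;> (funext ω; ring)
    · exact integrable_bdd_mul' P _ _ hA C (hb _ (S_abs S hSv)) (hY2i.sub hY0i)
    · exact integrable_bdd_mul' P _ _ hB C (hb _ fun ω => hr1 _) (hY2i.sub hY0i)
  have step3 : ∫ ω, ind (evD D1 D2 e) ω * S ω * h (X ω) * m (X ω) ∂P
      = ∫ ω, ind (evD D1 D2 e) ω * r (X ω) * h (X ω) * m (X ω) ∂P := by
    refine aux_ext P X hX _ _ hA hB ?_ m hm.1 ?_ ?_
    · rintro k hk ⟨K, hK⟩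
      have := hM (fun p => ind {p : ℝ × ℝ | p.1 = e.1} p)
        hfm ⟨1, fun p => ind_abs _ _⟩ (fun x => h x * k x) (hh.mul hk) ⟨C * K, fun x => by
          rw [abs_mul]
          exact mul_le_mul (hC x) (hK x) (abs_nonneg _) ((abs_nonneg _).trans (hC x))⟩
      simp only [hie] at this
      simp only [ind_evD]
      convert this using 2 <;> (funext ω; ring)
    · exact integrable_bdd_mul' P _ _ hA C (hb _ (S_abs S hSv)) hmi
    · exact integrable_bdd_mul' P _ _ hB C (hb _ fun ω => hr1 _) hmi
  have step2 := hm.2 (fun x => r x * h x) (hr.mul hh) ⟨1 * C, fun x => by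
    rw [abs_mul]
    exact mul_le_mul (hr1 x) (hC x) (abs_nonneg _) zero_le_one⟩
  rw [step3]
  refine step1.trans ?_
  refine Eq.trans ?_ (step2.trans ?_)
  · congr 1; funext ω; simp only [id]; ring
  · congr 1; funext ω; ring

theorem aux_core2 {Ω' E : Type*} [MeasurableSpace Ω'] [MeasurableSpace E] (P : Measure Ω')
    (X : Ω' → E) (D1 D2 S Y0 Y2 : Ω' → ℝ)
    (q : ℝ → E → ℝ) (hMAR : MAR P X D1 D2 S Y0 Y2 q)
    (e : ℝ × ℝ) (he : e.2 ∈ ({0, 1} : Set ℝ)) (c : E → ℝ) (hc1 : ∀ x, 0 < c x ∧ c x < 1)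
    (hc : IsCondMeanGiven P X (evD2 D2 e.2) (ind {ω | D1 ω = e.1}) c)
    (h : E → ℝ) (hh : Measurable h) (hhC : ∃ C, ∀ x, |h x| ≤ C) :
    ∫ ω, ind (evD D1 D2 e) ω * S ω * h (X ω) ∂P
      = ∫ ω, ind (evD2 D2 e.2) ω * S ω * c (X ω) * h (X ω) ∂P := by
  obtain ⟨r, hr, hr1, hM⟩ := aux_mar P X D1 D2 S Y0 Y2 q hMAR e.2 he
  obtain ⟨C, hC⟩ := hhC
  have hfm : Measurable (ind {p : ℝ × ℝ | p.1 = e.1}) :=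
    ind_meas (measurable_fst (measurableSet_singleton e.1))
  have hie : ∀ ω y, ind {p : ℝ × ℝ | p.1 = e.1} (D1 ω, y) = ind {ω | D1 ω = e.1} ω := by
    intro ω y; simp [ind, Set.indicator]
  have s1 := hM _ hfm ⟨1, fun p => ind_abs _ _⟩ h hh ⟨C, hC⟩
  have s2 := hc.2 (fun x => r x * h x) (hr.mul hh) ⟨1 * C, fun x => by
    rw [abs_mul]
    exact mul_le_mul (hr1 x) (hC x) (abs_nonneg _) zero_le_one⟩
  have s3 := hM (fun _ => 1) measurable_const ⟨1, fun p => by simp⟩ (fun x => c x * h x)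
    (hc.1.mul hh) ⟨1 * C, fun x => by
    rw [abs_mul]
    exact mul_le_mul (by rw [abs_of_pos (hc1 x).1]; exact (hc1 x).2.le) (hC x)
      (abs_nonneg _) zero_le_one⟩
  simp only [hie] at s1
  have e1 : ∫ ω, ind (evD D1 D2 e) ω * S ω * h (X ω) ∂P
      = ∫ ω, ind (evD2 D2 e.2) ω * S ω * ind {ω | D1 ω = e.1} ω * h (X ω) ∂P := by
    congr 1; funext ω; rw [ind_evD]; ring
  rw [e1, s1]
  refine Eq.trans ?_ (s2.trans ?_)
  · congr 1; funext ω; ring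
  · refine Eq.trans ?_ (s3.symm.trans ?_)
    · congr 1; funext ω; ring
    · congr 1; funext ω; ring


/-- Theorem 1, case 1: the robust estimand identifies the PDATT when the propensity-score
and outcome models are correctly specified (the missing-data models are arbitrary). -/
theorem statement_4
    [MeasurableSpace Ω] [m𝓧 : MeasurableSpace 𝓧]
    (P : Measure Ω) [IsProbabilityMeasure P]
    (X : Ω → 𝓧) (hX : Measurable X)
    (Y0 Y2 D1 D2 S : Ω → ℝ)
    (hY0 : Measurable Y0) (hY2 : Measurable Y2)
    (hD1 : Measurable D1) (hD2 : Measurable D2) (hS : Measurable S)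
    (hY0i : Integrable Y0 P) (hY2i : Integrable Y2 P)
    (hD1v : ∀ ω, D1 ω = 0 ∨ D1 ω = 1) (hD2v : ∀ ω, D2 ω = 0 ∨ D2 ω = 1)
    (hSv : ∀ ω, S ω = 0 ∨ S ω = 1)
    (Y0p Y2p : ℝ × ℝ → Ω → ℝ)
    (hY0p : ∀ e ∈ allPaths, Measurable (Y0p e) ∧ Integrable (Y0p e) P)
    (hY2p : ∀ e ∈ allPaths, Measurable (Y2p e) ∧ Integrable (Y2p e) P)
    (hcons0 : ∀ ω, Y0 ω = Y0p (D1 ω, D2 ω) ω)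
    (hcons2 : ∀ ω, Y2 ω = Y2p (D1 ω, D2 ω) ω)
    (d : ℝ × ℝ) (hd : d ∈ threePaths)
    (hDIDd : DID P X D1 D2 Y0p Y2p d) (hDIDd' : DID P X D1 D2 Y0p Y2p (0, 0))
    (q : ℝ → 𝓧 → ℝ) (hMAR : MAR P X D1 D2 S Y0 Y2 q)
    (pd pd' : 𝓧 → ℝ)
    (hpd : IsCondMeanGiven P X Set.univ (ind (evD D1 D2 d)) pd)
    (hpd' : IsCondMeanGiven P X Set.univ (ind (evD D1 D2 (0, 0))) pd')
    (hpdpos : ∀ᵐ ω ∂P, 0 < pd (X ω)) (hpd'pos : ∀ᵐ ω ∂P, 0 < pd' (X ω))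
    (μd μd' πc πc' π2 π0 φ2 φ0 : 𝓧 → ℝ)
    (hμdm : Measurable μd) (hμd'm : Measurable μd')
    (hμdi : Integrable (fun ω => μd (X ω)) P) (hμd'i : Integrable (fun ω => μd' (X ω)) P)
    (hπcm : Measurable πc) (hπc'm : Measurable πc')
    (hπ2m : Measurable π2) (hπ0m : Measurable π0)
    (hπcv : ∀ x, 0 < πc x ∧ πc x < 1) (hπc'v : ∀ x, 0 < πc' x ∧ πc' x < 1)
    (hπ2v : ∀ x, 0 < π2 x ∧ π2 x < 1) (hπ0v : ∀ x, 0 < π0 x ∧ π0 x < 1)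
    (hφ2m : Measurable φ2) (hφ0m : Measurable φ0)
    (hφ2v : ∀ x, 0 < φ2 x ∧ φ2 x ≤ 1) (hφ0v : ∀ x, 0 < φ0 x ∧ φ0 x ≤ 1)
    (hn1i : Integrable (n1 X D1 D2 S φ2 d) P)
    (hn1pos : 0 < ∫ ω, n1 X D1 D2 S φ2 d ω ∂P)
    (hn2i : Integrable (n2 X D1 D2 S φ0 πc πc' π2 π0) P)
    (hn2pos : 0 < ∫ ω, n2 X D1 D2 S φ0 πc πc' π2 π0 ω ∂P)
    (hn3i : Integrable (n3 X D2 πc d.2) P)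
    (hn3pos : 0 < ∫ ω, n3 X D2 πc d.2 ω ∂P)
    (hn4i : Integrable (n4 X D2 S φ2 πc d.2) P)
    (hn4pos : 0 < ∫ ω, n4 X D2 S φ2 πc d.2 ω ∂P)
    (hint1 : Integrable (fun ω =>
        (n1 X D1 D2 S φ2 d ω / ∫ ω', n1 X D1 D2 S φ2 d ω' ∂P
          - n2 X D1 D2 S φ0 πc πc' π2 π0 ω / ∫ ω', n2 X D1 D2 S φ0 πc πc' π2 π0 ω' ∂P)
        * (Y2 ω - Y0 ω - μd' (X ω))) P)
    (hint2 : Integrable (fun ω =>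
        (n3 X D2 πc d.2 ω / ∫ ω', n3 X D2 πc d.2 ω' ∂P
          - n4 X D2 S φ2 πc d.2 ω / ∫ ω', n4 X D2 S φ2 πc d.2 ω' ∂P)
        * (μd (X ω) - μd' (X ω))) P)
    (hπc_corr : IsCondMeanGiven P X (evD2 D2 d.2) (ind {ω | D1 ω = d.1}) πc)
    (hπ2_corr : IsCondMeanGiven P X Set.univ (ind (evD2 D2 d.2)) π2)
    (hπc'_corr : IsCondMeanGiven P X (evD2 D2 0) (ind {ω | D1 ω = 0}) πc')
    (hπ0_corr : IsCondMeanGiven P X Set.univ (ind (evD2 D2 0)) π0)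
    (hμd_corr : IsCondMeanGiven P X (evD D1 D2 d) (fun ω => Y2 ω - Y0 ω) μd)
    (hμd'_corr : IsCondMeanGiven P X (evD D1 D2 (0, 0)) (fun ω => Y2 ω - Y0 ω) μd')
    :
    tauR P X D1 D2 S Y0 Y2 d μd μd' πc πc' π2 π0 φ2 φ0 = tau P D1 D2 Y2p d := by
  have hd2 : d.2 ∈ ({0, 1} : Set ℝ) := by
    rcases hd with rfl | rfl | rfl <;> simp
  have hdall : d ∈ allPaths := by
    rcases hd with rfl | rfl | rfl <;> simp [allPaths]
  have h0all : ((0, 0) : ℝ × ℝ) ∈ allPaths := by simp [allPaths]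
  have hdne : ∀ ω, D1 ω = d.1 ∧ D2 ω = d.2 → ¬ (D1 ω = 0 ∧ D2 ω = 0) := by
    rintro ω ⟨h1, h2⟩ ⟨h3, h4⟩
    rw [h3] at h1; rw [h4] at h2
    rcases hd with rfl | rfl | rfl <;> simp at h1 h2
  have hId := ind_meas (meas_evD hD1 hD2 d)
  have hI0 := ind_meas (meas_evD hD1 hD2 (0, 0))
  have hI2 := ind_meas (meas_evD2 hD2 d.2)
  have hΔi : Integrable (fun ω => Y2 ω - Y0 ω) P := hY2i.sub hY0i
  have hΔm : Measurable (fun ω => Y2 ω - Y0 ω) := hY2.sub hY0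
  have hIint : Integrable (ind (evD D1 D2 d)) P :=
    (integrable_const (1 : ℝ)).indicator (meas_evD hD1 hD2 d)
  have hI2int : Integrable (ind (evD2 D2 d.2)) P :=
    (integrable_const (1 : ℝ)).indicator (meas_evD2 hD2 d.2)
  have hInn : ∀ (A : Set Ω) ω, 0 ≤ ind A ω := by
    intro A ω; unfold ind Set.indicator; split_ifs <;> simp
  -- identification of the trend
  obtain ⟨hna, tr, htr1, htr2⟩ := hDIDd
  obtain ⟨-, tr', htr1', htr2'⟩ := hDIDd'
  have htt : ∀ᵐ ω ∂P, tr (X ω) = tr' (X ω) := by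
    have := aux_unique P X hX (ind Set.univ) (ind_meas MeasurableSet.univ)
      (Filter.Eventually.of_forall (hInn _))
      ((integrable_const (1 : ℝ)).indicator MeasurableSet.univ) tr tr' htr1.1 htr1'.1
      (fun h hh hC => (htr1.2 h hh hC).symm.trans (htr1'.2 h hh hC))
    filter_upwards [this] with ω hω
    simpa [ind, sub_eq_zero] using hω
  have hmu0 : ∀ᵐ ω ∂P, ind (evD D1 D2 (0, 0)) ω * |μd' (X ω) - tr' (X ω)| = 0 := by
    refine aux_unique P X hX _ hI0 (Filter.Eventually.of_forall (hInn _))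
      ((integrable_const (1 : ℝ)).indicator (meas_evD hD1 hD2 (0, 0))) μd' tr' hμd'm htr1'.1
      (fun h hh hC => (hμd'_corr.2 h hh hC).symm.trans (Eq.trans ?_ (htr2'.2 h hh hC)))
    congr 1; funext ω
    by_cases hω : ω ∈ evD D1 D2 (0, 0)
    · beta_reduce
      rw [hcons0 ω, hcons2 ω, hω.1, hω.2]
    · simp [ind, hω]
  have hmu : ∀ᵐ ω ∂P, μd' (X ω) = tr' (X ω) := by
    set B : Set 𝓧 := {x | μd' x = tr' x}ᶜ with hB
    have hBm : MeasurableSet B := (measurableSet_eq_fun hμd'm htr1'.1).compl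
    have hBi := ind_meas hBm
    have := aux_unique P X hX (fun ω => ind B (X ω)) (hBi.comp hX)
      (Filter.Eventually.of_forall fun ω => by
        simp only [ind, Set.indicator]; split_ifs <;> simp)
      ((integrable_const (1 : ℝ)).mono (hBi.comp hX).aestronglyMeasurable
        (Filter.Eventually.of_forall fun ω => by simpa using ind_abs B (X ω)))
      pd' (fun _ => 0) hpd'.1 measurable_const (by
        rintro h hh ⟨C, hC⟩
        have := hpd'.2 (fun x => ind B x * h x) (hBi.mul hh) ⟨1 * C, fun x => by
          rw [abs_mul]
          exact mul_le_mul (ind_abs _ _) (hC x) (abs_nonneg _) zero_le_one⟩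
        refine Eq.trans ?_ (this.symm.trans ?_)
        · congr 1; funext ω; simp [ind]; ring
        · apply integral_congr_ae
          filter_upwards [hmu0] with ω hω
          by_cases hx : μd' (X ω) = tr' (X ω)
          · simp [ind, hB, hx]
          · have : ind (evD D1 D2 (0, 0)) ω = 0 := by
              rcases mul_eq_zero.1 hω with h | h
              · exact h
              · exact absurd (sub_eq_zero.1 (abs_eq_zero.1 h)) hx
            simp [this])
    filter_upwards [this, hpd'pos] with ω hω hp
    by_contra hx
    have hxB : X ω ∈ B := hx
    simp [ind, hxB, hp.ne'] at hω
  -- the ATT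
  have hIZ : ∀ Z : Ω → ℝ, Integrable Z P → Integrable (fun ω => ind (evD D1 D2 d) ω * Z ω) P :=
    fun Z hZ => integrable_bdd_mul' P _ _ hId 1 (ind_abs _) hZ
  have hatt : ∫ ω in evD D1 D2 d, (Y2p d ω - Y2p (0, 0) ω) ∂P
      = ∫ ω, ind (evD D1 D2 d) ω * (Y2 ω - Y0 ω - μd' (X ω)) ∂P := by
    rw [← integral_indicator (meas_evD hD1 hD2 d)]
    have e1 : ∀ ω, (evD D1 D2 d).indicator (fun ω => Y2p d ω - Y2p (0, 0) ω) ω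
        = ind (evD D1 D2 d) ω * (Y2 ω - Y0 ω) + ind (evD D1 D2 d) ω * Y0p d ω
          - ind (evD D1 D2 d) ω * Y0p (0, 0) ω
          - ind (evD D1 D2 d) ω * (Y2p (0, 0) ω - Y0p (0, 0) ω) := by
      intro ω
      by_cases hω : ω ∈ evD D1 D2 d
      · have : (D1 ω, D2 ω) = d := Prod.ext hω.1 hω.2
        simp only [ind, hω, Set.indicator_of_mem, hcons0 ω, hcons2 ω, this]; ring
      · simp [ind, hω]
    simp only [e1]
    have i1 := hIZ _ hΔi
    have i2 := hIZ _ (hY0p d hdall).2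
    have i3 := hIZ _ (hY0p _ h0all).2
    have i4 := hIZ _ ((hY2p _ h0all).2.sub (hY0p _ h0all).2)
    have i5 := hIZ _ hμd'i
    have hna1 := hna (fun _ => 1) measurable_const ⟨1, fun _ => by simp⟩
    have htr21 := htr2.2 (fun _ => 1) measurable_const ⟨1, fun _ => by simp⟩
    simp only [mul_one] at hna1 htr21
    have htm : ∫ ω, ind (evD D1 D2 d) ω * tr (X ω) ∂P
        = ∫ ω, ind (evD D1 D2 d) ω * μd' (X ω) ∂P := by
      apply integral_congr_ae
      filter_upwards [htt, hmu] with ω h1 h2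
      rw [h1, h2]
    simp only [Pi.sub_apply] at i4
    have i12 : Integrable (fun ω => ind (evD D1 D2 d) ω * (Y2 ω - Y0 ω)
        + ind (evD D1 D2 d) ω * Y0p d ω) P := i1.add i2
    have i123 : Integrable (fun ω => ind (evD D1 D2 d) ω * (Y2 ω - Y0 ω)
        + ind (evD D1 D2 d) ω * Y0p d ω - ind (evD D1 D2 d) ω * Y0p (0, 0) ω) P := i12.sub i3
    rw [integral_sub i123 i4, integral_sub i12 i3, integral_add i1 i2,
      hna1, htr21, htm]
    simp only [mul_sub _ (_ - _) _]
    rw [integral_sub i1 i5]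
    ring
  -- integrability splits
  set c1 := ∫ ω, n1 X D1 D2 S φ2 d ω ∂P with hc1
  set c2 := ∫ ω, n2 X D1 D2 S φ0 πc πc' π2 π0 ω ∂P with hc2
  set c3 := ∫ ω, n3 X D2 πc d.2 ω ∂P with hc3
  set c4 := ∫ ω, n4 X D2 S φ2 πc d.2 ω ∂P with hc4
  have j1 : Integrable (fun ω => n1 X D1 D2 S φ2 d ω * (Y2 ω - Y0 ω - μd' (X ω))) P := by
    refine ((hIZ _ hint1).const_mul c1).congr (Filter.Eventually.of_forall fun ω => ?_)
    by_cases hω : ω ∈ evD D1 D2 d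
    · have h0 : ω ∉ evD D1 D2 (0, 0) := hdne ω hω
      simp only [n1, n2, ind, hω, h0, Set.indicator_of_mem, Set.indicator_of_notMem,
        not_false_eq_true]
      have := hn1pos.ne'
      field_simp
      ring
    · simp [n1, ind, hω]
  have j2 : Integrable (fun ω => n2 X D1 D2 S φ0 πc πc' π2 π0 ω * (Y2 ω - Y0 ω - μd' (X ω))) P := by
    have := (integrable_bdd_mul' P _ _ hI0 1 (ind_abs _) hint1).const_mul (-c2)
    refine this.congr (Filter.Eventually.of_forall fun ω => ?_)
    by_cases hω : ω ∈ evD D1 D2 (0, 0)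
    · have h0 : ω ∉ evD D1 D2 d := fun h => hdne ω h hω
      simp only [n1, n2, ind, hω, h0, Set.indicator_of_mem, Set.indicator_of_notMem,
        not_false_eq_true, mul_zero, zero_div, zero_sub, mul_one, one_mul]
      have := hn2pos.ne'
      rw [neg_mul, neg_mul, mul_neg, neg_neg, ← mul_assoc, mul_div_cancel₀ _ this]
    · simp [n2, ind, hω]
  have hμμ : Integrable (fun ω => μd (X ω) - μd' (X ω)) P := hμdi.sub hμd'i
  have hn3m : Measurable (n3 X D2 πc d.2) := (hπcm.comp hX).mul hI2
  have hπ1 : ∀ x, |πc x| ≤ 1 := fun x => by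
    rw [abs_of_pos (hπcv x).1]; exact (hπcv x).2.le
  have j3 : Integrable (fun ω => n3 X D2 πc d.2 ω * (μd (X ω) - μd' (X ω))) P := by
    refine integrable_bdd_mul' P _ _ hn3m 1 (fun ω => ?_) hμμ
    simp only [n3, abs_mul]
    exact mul_le_one₀ (hπ1 _) (abs_nonneg _) (ind_abs _ _)
  have j4 : Integrable (fun ω => n4 X D2 S φ2 πc d.2 ω * (μd (X ω) - μd' (X ω))) P := by
    refine (((j3.const_mul c3⁻¹).sub hint2).const_mul c4).congr
      (Filter.Eventually.of_forall fun ω => ?_)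
    have h3 := hn3pos.ne'
    have h4 := hn4pos.ne'
    simp only [Pi.sub_apply]
    field_simp
    ring
  have hSb := S_abs S hSv
  have hIS : ∀ (A : Set Ω) ω, |ind A ω * S ω| ≤ 1 := fun A ω => by
    rw [abs_mul]; exact mul_le_one₀ (ind_abs _ _) (abs_nonneg _) (hSb _)
  -- term 2
  have k2 : ∫ ω, n2 X D1 D2 S φ0 πc πc' π2 π0 ω * (Y2 ω - Y0 ω - μd' (X ω)) ∂P = 0 := by
    have := aux_ext P X hX
      (fun ω => ind (evD D1 D2 (0, 0)) ω * S ω * (Y2 ω - Y0 ω - μd' (X ω))) (fun _ => 0)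
      ((hI0.mul hS).mul (hΔm.sub (hμd'm.comp hX))) measurable_const (by
        rintro h hh ⟨C, hC⟩
        have := aux_core1 P X hX D1 D2 S Y0 Y2 hY0 hY2 hY0i hY2i hD1 hD2 hS hSv q hMAR (0, 0)
          (by simp) μd' hμd'_corr hμd'i h hh ⟨C, hC⟩
        have hm : Measurable (fun ω => ind (evD D1 D2 (0, 0)) ω * S ω * h (X ω)) :=
          (hI0.mul hS).mul (hh.comp hX)
        have hb : ∀ ω, |ind (evD D1 D2 (0, 0)) ω * S ω * h (X ω)| ≤ 1 * C := fun ω => by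
          rw [abs_mul]; exact mul_le_mul (hIS _ _) (hC _) (abs_nonneg _) zero_le_one
        rw [← sub_eq_zero, ← integral_sub (integrable_bdd_mul' P _ _ hm _ hb hΔi)
          (integrable_bdd_mul' P _ _ hm _ hb hμd'i)] at this
        simp only [zero_mul, integral_zero]
        refine Eq.trans ?_ this
        congr 1; funext ω; ring)
      (fun x => (πc x * π2 x / (πc' x * π0 x)) / φ0 x)
      (((hπcm.mul hπ2m).div (hπc'm.mul hπ0m)).div hφ0m)
      (j2.congr (Filter.Eventually.of_forall fun ω => by simp only [n2]; ring))
      (by simp)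
    simp only [zero_mul, integral_zero] at this
    refine Eq.trans ?_ this
    congr 1; funext ω; simp only [n2]; ring
  have hcore2 := aux_core2 P X D1 D2 S Y0 Y2 q hMAR d hd2 πc hπcv hπc_corr
  have hUm : Measurable (fun ω => ind (evD D1 D2 d) ω * S ω) := hId.mul hS
  have hVm : Measurable (fun ω => ind (evD2 D2 d.2) ω * S ω * πc (X ω)) :=
    (hI2.mul hS).mul (hπcm.comp hX)
  have hVb : ∀ ω, |ind (evD2 D2 d.2) ω * S ω * πc (X ω)| ≤ 1 := fun ω => by
    rw [abs_mul]; exact mul_le_one₀ (hIS _ _) (abs_nonneg _) (hπ1 _)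
  -- c1 = c4
  have k14 : c1 = c4 := by
    have := aux_ext P X hX _ _ hUm hVm hcore2 (fun x => (φ2 x)⁻¹) hφ2m.inv
      (hn1i.congr (Filter.Eventually.of_forall fun ω => by simp only [n1]; ring))
      (hn4i.congr (Filter.Eventually.of_forall fun ω => by simp only [n4]; ring))
    rw [hc1, hc4]
    refine Eq.trans ?_ (this.trans ?_)
    · congr 1; funext ω; simp only [n1]; ring
    · congr 1; funext ω; simp only [n4]; ring
  have k1 : ∫ ω, n1 X D1 D2 S φ2 d ω * (Y2 ω - Y0 ω - μd' (X ω)) ∂P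
      = ∫ ω, n4 X D2 S φ2 πc d.2 ω * (μd (X ω) - μd' (X ω)) ∂P := by
    have := aux_ext P X hX
      (fun ω => ind (evD D1 D2 d) ω * S ω * (Y2 ω - Y0 ω - μd' (X ω)))
      (fun ω => ind (evD2 D2 d.2) ω * S ω * πc (X ω) * (μd (X ω) - μd' (X ω)))
      (hUm.mul (hΔm.sub (hμd'm.comp hX)))
      (hVm.mul ((hμdm.comp hX).sub (hμd'm.comp hX))) (by
        rintro h hh ⟨C, hC⟩
        have s1 := aux_core1 P X hX D1 D2 S Y0 Y2 hY0 hY2 hY0i hY2i hD1 hD2 hS hSv q hMAR d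
          hd2 μd hμd_corr hμdi h hh ⟨C, hC⟩
        have hm : Measurable (fun ω => ind (evD D1 D2 d) ω * S ω * h (X ω)) :=
          hUm.mul (hh.comp hX)
        have hb : ∀ ω, |ind (evD D1 D2 d) ω * S ω * h (X ω)| ≤ 1 * C := fun ω => by
          rw [abs_mul]; exact mul_le_mul (hIS _ _) (hC _) (abs_nonneg _) zero_le_one
        have hm' : Measurable (fun ω => ind (evD2 D2 d.2) ω * S ω * πc (X ω) * h (X ω)) :=
          hVm.mul (hh.comp hX)
        have hb' : ∀ ω, |ind (evD2 D2 d.2) ω * S ω * πc (X ω) * h (X ω)| ≤ 1 * C := fun ω => by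
          rw [abs_mul]; exact mul_le_mul (hVb _) (hC _) (abs_nonneg _) zero_le_one
        have iμ' := integrable_bdd_mul' P _ _ hm _ hb hμd'i
        have s2 := aux_ext P X hX _ _ hUm hVm hcore2 (fun x => h x * (μd x - μd' x))
          (hh.mul (hμdm.sub hμd'm))
          ((integrable_bdd_mul' P _ _ hm _ hb hμμ).congr
            (Filter.Eventually.of_forall fun ω => by ring))
          ((integrable_bdd_mul' P _ _ hm' _ hb' hμμ).congr
            (Filter.Eventually.of_forall fun ω => by ring))
        have s3 : ∫ ω, ind (evD D1 D2 d) ω * S ω * (Y2 ω - Y0 ω - μd' (X ω)) * h (X ω) ∂P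
            = ∫ ω, ind (evD D1 D2 d) ω * S ω * (h (X ω) * (μd (X ω) - μd' (X ω))) ∂P := by
          have a1 := integral_sub (integrable_bdd_mul' P _ _ hm _ hb hΔi) iμ'
          have a2 := integral_sub (integrable_bdd_mul' P _ _ hm _ hb hμdi) iμ'
          rw [s1, ← a2] at a1
          refine Eq.trans ?_ (a1.trans ?_)
          · congr 1; funext ω; ring
          · congr 1; funext ω; ring
        refine s3.trans (s2.trans ?_)
        congr 1; funext ω; ring)
      (fun x => (φ2 x)⁻¹) hφ2m.inv
      (j1.congr (Filter.Eventually.of_forall fun ω => by simp only [n1]; ring))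
      (j4.congr (Filter.Eventually.of_forall fun ω => by simp only [n4]; ring))
    refine Eq.trans ?_ (this.trans ?_)
    · congr 1; funext ω; simp only [n1]; ring
    · congr 1; funext ω; simp only [n4]; ring
  -- n3
  have hcore3 : ∀ h : 𝓧 → ℝ, Measurable h → (∃ C, ∀ x, |h x| ≤ C) →
      ∫ ω, ind (evD D1 D2 d) ω * h (X ω) ∂P = ∫ ω, n3 X D2 πc d.2 ω * h (X ω) ∂P := by
    intro h hh hC
    refine Eq.trans ?_ ((hπc_corr.2 h hh hC).trans ?_)
    · congr 1; funext ω; rw [ind_evD]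
    · congr 1; funext ω; simp only [n3]; ring
  have k3c : c3 = (P (evD D1 D2 d)).toReal := by
    have := hcore3 (fun _ => 1) measurable_const ⟨1, fun _ => by simp⟩
    simp only [mul_one] at this
    rw [hc3, ← this]
    simp only [ind]
    rw [integral_indicator (meas_evD hD1 hD2 d)]
    simp [Measure.real]
  have k3 : ∫ ω, n3 X D2 πc d.2 ω * (μd (X ω) - μd' (X ω)) ∂P
      = ∫ ω, ind (evD D1 D2 d) ω * (Y2 ω - Y0 ω - μd' (X ω)) ∂P := by
    have s := aux_ext P X hX _ _ hId hn3m hcore3 (fun x => μd x - μd' x) (hμdm.sub hμd'm)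
      (hIZ _ hμμ) j3
    have s1 := hμd_corr.2 (fun _ => 1) measurable_const ⟨1, fun _ => by simp⟩
    simp only [mul_one] at s1
    have a1 := integral_sub (hIZ _ hΔi) (hIZ _ hμd'i)
    have a2 := integral_sub (hIZ _ hμdi) (hIZ _ hμd'i)
    rw [s1, ← a2] at a1
    refine s.symm.trans (Eq.trans ?_ (a1.symm.trans ?_))
    · congr 1; funext ω; ring
    · congr 1; funext ω; ring
  -- assembly
  unfold tauR tau
  rw [hatt, ← k3c, ← hc1, ← hc2, ← hc3, ← hc4]
  have t1 : ∫ ω, (n1 X D1 D2 S φ2 d ω / c1 - n2 X D1 D2 S φ0 πc πc' π2 π0 ω / c2)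
      * (Y2 ω - Y0 ω - μd' (X ω)) ∂P
      = c1⁻¹ * ∫ ω, n1 X D1 D2 S φ2 d ω * (Y2 ω - Y0 ω - μd' (X ω)) ∂P := by
    have := integral_sub (j1.const_mul c1⁻¹) (j2.const_mul c2⁻¹)
    rw [integral_const_mul, integral_const_mul, k2, mul_zero, sub_zero] at this
    rw [← this]
    congr 1; funext ω; ring
  have t2 : ∫ ω, (n3 X D2 πc d.2 ω / c3 - n4 X D2 S φ2 πc d.2 ω / c4)
      * (μd (X ω) - μd' (X ω)) ∂P
      = c3⁻¹ * ∫ ω, n3 X D2 πc d.2 ω * (μd (X ω) - μd' (X ω)) ∂P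
        - c4⁻¹ * ∫ ω, n4 X D2 S φ2 πc d.2 ω * (μd (X ω) - μd' (X ω)) ∂P := by
    have := integral_sub (j3.const_mul c3⁻¹) (j4.const_mul c4⁻¹)
    rw [integral_const_mul, integral_const_mul] at this
    rw [← this]
    congr 1; funext ω; ring
  rw [t1, t2, k1, k3, k14]
  ring

end DIDMissing
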